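/- Let A be a real m×n matrix, b ∈ ℝᵐ, u ∈ ℝⁿ, τ > 0, and let X = I₁ × ⋯ × Iₙ ⊆ ℝⁿ be a box with each Iᵢ ∈ T₁ ∪ T₂. Define s : ℝᵐ → ℝⁿ componentwise by s(y)ᵢ = [τ·shrink(τ⁻¹uᵢ + (Aᵀy)ᵢ)]_{Iᵢ}⁺. Then the map y ↦ A·s(y) (the gradient b − A·s(y) of the dual objective, up to sign and constant) is Lipschitz continuous with constant τ‖A‖²: for all y, ỹ ∈ ℝᵐ, ‖A·s(y) − A·s(ỹ)‖₂ ≤ τ‖A‖²·‖y − ỹ‖₂, where ‖A‖ is the ℓ²→ℓ² operator norm of A. -/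

import Mathlib

/-! Shrinkage and projection onto an interval are both nonexpansive on `ℝ`, so
`|s(y)ᵢ - s(y')ᵢ| ≤ τ |(Aᵀ(y - y'))ᵢ|` in each coordinate, hence
`‖s(y) - s(y')‖ ≤ τ ‖Aᵀ(y - y')‖`. Since `Aᵀ` represents the adjoint of `A`, it has the same
operator norm; applying `A` contributes the second factor `‖A‖`. -/

noncomputable section

open scoped RealInnerProductSpace

/-- The shrinkage operator `shrink(s) = sign(s) * max (|s| - 1) 0`. -/
def shrink (s : ℝ) : ℝ := Real.sign s * max (|s| - 1) 0

/-- `IsProjR I w p` : `p` is the projection of `w` onto `I ⊆ ℝ`. -/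
def IsProjR (I : Set ℝ) (w p : ℝ) : Prop := p ∈ I ∧ ∀ t ∈ I, |p - w| ≤ |t - w|

/-- Membership in the class `T₁` of intervals. -/
def InT1 (I : Set ℝ) : Prop :=
  (∃ c : ℝ, 0 < c ∧ I = Set.Ici c) ∨
  (∃ c : ℝ, c < 0 ∧ I = Set.Iic c) ∨
  (∃ c d : ℝ, 0 < c ∧ c < d ∧ I = Set.Icc c d) ∨
  (∃ c d : ℝ, d < c ∧ c < 0 ∧ I = Set.Icc d c)

/-- Membership in the class `T₂` of intervals. -/
def InT2 (I : Set ℝ) : Prop := ∃ c d : ℝ, c < 0 ∧ 0 < d ∧ I = Set.Icc c d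

/-- The ℓ²→ℓ² operator norm of a matrix. -/
def opNorm {m n : ℕ} (A : Matrix (Fin m) (Fin n) ℝ) : ℝ :=
  ‖LinearMap.toContinuousLinearMap (Matrix.toEuclideanLin A)‖

/-- Shrinkage subtracts the projection onto `[-1, 1]`. -/
lemma shrink_eq (s : ℝ) : shrink s = s - max (-1) (min 1 s) := by
  unfold shrink
  rcases lt_trichotomy s 0 with h | rfl | h
  · rw [Real.sign_of_neg h, abs_of_neg h]
    grind
  · simp
  · rw [Real.sign_of_pos h, abs_of_pos h]
    grind

lemma abs_shrink_sub_le (s t : ℝ) : |shrink s - shrink t| ≤ |s - t| := by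
  rw [shrink_eq, shrink_eq]
  grind

lemma ordConnected_of_T {I : Set ℝ} (h : InT1 I ∨ InT2 I) : I.OrdConnected := by
  rcases h with (⟨c, -, rfl⟩ | ⟨c, -, rfl⟩ | ⟨c, d, -, -, rfl⟩ | ⟨c, d, -, -, rfl⟩) |
    ⟨c, d, -, -, rfl⟩
  · exact Set.ordConnected_Ici
  · exact Set.ordConnected_Iic
  all_goals exact Set.ordConnected_Icc

/-- If two projections satisfy `p < q`, the projected points lie outside `(p, q)` on the
corresponding sides: otherwise a point of `[p, q] ⊆ I` would be strictly closer. -/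
lemma sub_le_of_isProjR {I : Set ℝ} (hI : I.OrdConnected) {w v p q : ℝ}
    (hp : IsProjR I w p) (hq : IsProjR I v q) (hpq : p < q) : q - p ≤ v - w := by
  have hw : w ≤ p := by
    by_contra! h
    have := hp.2 (min w q) (hI.out hp.1 hq.1 ⟨le_min h.le hpq.le, min_le_right _ _⟩)
    grind
  have hv : q ≤ v := by
    by_contra! h
    have := hq.2 (max v p) (hI.out hp.1 hq.1 ⟨le_max_right _ _, max_le h.le hpq.le⟩)
    grind
  linarith

lemma abs_sub_le_of_isProjR {I : Set ℝ} (hI : I.OrdConnected) {w v p q : ℝ}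
    (hp : IsProjR I w p) (hq : IsProjR I v q) : |p - q| ≤ |w - v| := by
  rcases lt_trichotomy p q with h | rfl | h
  · have := sub_le_of_isProjR hI hp hq h
    grind
  · simp
  · have := sub_le_of_isProjR hI hq hp h
    grind

lemma norm_apply_le {m n : ℕ} (A : Matrix (Fin m) (Fin n) ℝ) (x : EuclideanSpace ℝ (Fin n)) :
    ‖Matrix.toEuclideanLin A x‖ ≤ opNorm A * ‖x‖ :=
  (LinearMap.toContinuousLinearMap (Matrix.toEuclideanLin A)).le_opNorm x

lemma norm_transpose_apply_le {m n : ℕ} (A : Matrix (Fin m) (Fin n) ℝ)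
    (y : EuclideanSpace ℝ (Fin m)) :
    ‖Matrix.toEuclideanLin A.transpose y‖ ≤ opNorm A * ‖y‖ := by
  have h : Matrix.toEuclideanLin A.transpose = LinearMap.adjoint (Matrix.toEuclideanLin A) := by
    rw [← Matrix.toEuclideanLin_conjTranspose_eq_adjoint, Matrix.conjTranspose_eq_transpose_of_trivial]
  rw [h]
  have := (ContinuousLinearMap.adjoint
    (LinearMap.toContinuousLinearMap (Matrix.toEuclideanLin A))).le_opNorm y
  rwa [LinearIsometryEquiv.norm_map] at this

/-- the dual-gradient map `y ↦ A·s(y)` is Lipschitz with constant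
`τ‖A‖²`, where `‖A‖` is the ℓ²→ℓ² operator norm. -/
theorem proshrink_gradient_lipschitz {m n : ℕ} (A : Matrix (Fin m) (Fin n) ℝ)
    (b : EuclideanSpace ℝ (Fin m)) (u : EuclideanSpace ℝ (Fin n))
    (τ : ℝ) (hτ : 0 < τ)
    (I : Fin n → Set ℝ) (hI : ∀ i, InT1 (I i) ∨ InT2 (I i))
    (X : Set (EuclideanSpace ℝ (Fin n))) (hX : X = {x | ∀ i, x i ∈ I i})
    (S : EuclideanSpace ℝ (Fin m) → EuclideanSpace ℝ (Fin n))
    (hS : ∀ y i, IsProjR (I i)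
      (τ * shrink (τ⁻¹ * u i + Matrix.toEuclideanLin A.transpose y i)) (S y i))
    (y ytil : EuclideanSpace ℝ (Fin m)) :
    ‖Matrix.toEuclideanLin A (S y) - Matrix.toEuclideanLin A (S ytil)‖ ≤
      τ * opNorm A ^ 2 * ‖y - ytil‖ := by
  have hcoord : ∀ i, ‖(S y - S ytil) i‖ ≤
      ‖(τ • Matrix.toEuclideanLin A.transpose (y - ytil)) i‖ := by
    intro i
    have h1 := abs_sub_le_of_isProjR (ordConnected_of_T (hI i)) (hS y i) (hS ytil i)
    have h2 := abs_shrink_sub_le (τ⁻¹ * u i + Matrix.toEuclideanLin A.transpose y i)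
      (τ⁻¹ * u i + Matrix.toEuclideanLin A.transpose ytil i)
    rw [← mul_sub, abs_mul] at h1
    rw [add_sub_add_left_eq_sub] at h2
    rw [map_sub, PiLp.smul_apply, PiLp.sub_apply, PiLp.sub_apply, smul_eq_mul, Real.norm_eq_abs,
      Real.norm_eq_abs, abs_mul]
    exact h1.trans (mul_le_mul_of_nonneg_left h2 (abs_nonneg τ))
  have hS' : ‖S y - S ytil‖ ≤ τ * ‖Matrix.toEuclideanLin A.transpose (y - ytil)‖ := by
    rw [← abs_of_pos hτ, ← Real.norm_eq_abs, ← norm_smul, EuclideanSpace.norm_eq,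
      EuclideanSpace.norm_eq]
    gcongr with i _
    exact hcoord i
  have h0 : 0 ≤ opNorm A := norm_nonneg _
  calc ‖Matrix.toEuclideanLin A (S y) - Matrix.toEuclideanLin A (S ytil)‖
      = ‖Matrix.toEuclideanLin A (S y - S ytil)‖ := by rw [map_sub]
    _ ≤ opNorm A * ‖S y - S ytil‖ := norm_apply_le A _
    _ ≤ opNorm A * (τ * (opNorm A * ‖y - ytil‖)) := by
      gcongr
      exact hS'.trans (mul_le_mul_of_nonneg_left (norm_transpose_apply_le A _) hτ.le)
    _ = τ * opNorm A ^ 2 * ‖y - ytil‖ := by ring
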